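/- Let q be a positive integer, λ̲ ≤ λ̄ componentwise in ℝ^q, and Λ = {λ ∈ ℝ^q : λ̲ ≤ λ ≤ λ̄ componentwise}. Let g : ℝ^q → ℝ^q be continuous on Λ and monotone with respect to the componentwise order on Λ (i.e., for all λ, μ ∈ Λ with λ ≤ μ componentwise, g(λ) ≤ g(μ) componentwise). Assume for every i ∈ {1,…,q}: g_i evaluated at the point whose i-th coordinate is λ̲_i and whose j-th coordinate is λ̄_j for all j ≠ i is ≤ 0, and g_i evaluated at the point whose i-th coordinate is λ̄_i and whose j-th coordinate is λ̲_j for all j ≠ i is ≥ 0. Then there exists λ* ∈ Λ with g(λ*) = 0. -/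

import Mathlib

namespace PM
open Finset

/-- vertices of Kuhn simplex -/
def vert {n : ℕ} (τ : Equiv.Perm (Fin n)) (v : Fin n → ℕ) (m : ℕ) : Fin n → ℕ :=
  fun i => v i + if (τ i).val < m then 1 else 0

lemma vert_congr {n : ℕ} {τ τ' : Equiv.Perm (Fin n)} {v v' : Fin n → ℕ} {m m' : ℕ} {i : Fin n}
    (h : v i = v' i) (hlt : (τ i).val < m ↔ (τ' i).val < m') : vert τ v m i = vert τ' v' m' i := by
  simp only [vert, h, hlt]

/-- A column of the matrix: a leading one, then the values of f. -/
def row {n : ℕ} (f : Fin n → (Fin n → ℕ) → ℝ) (w : Fin n → ℕ) : Fin (n+1) → ℝ :=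
  Fin.cons 1 (fun k => f k w)

def mat {n : ℕ} (f : Fin n → (Fin n → ℕ) → ℝ) (w : Fin (n+1) → (Fin n → ℕ)) :
    Matrix (Fin (n+1)) (Fin (n+1)) ℝ := Matrix.of fun r m => row f (w m) r

def box (n N : ℕ) : Finset (Fin n → ℕ) := Fintype.piFinset (fun _ => range N)

def sg {n : ℕ} (τ : Equiv.Perm (Fin n)) : ℝ := ((Equiv.Perm.sign τ : ℤ) : ℝ)

def T {n : ℕ} (N : ℕ) (f : Fin n → (Fin n → ℕ) → ℝ) : ℝ :=
  ∑ τ : Equiv.Perm (Fin n), sg τ * ∑ v ∈ box n N, (mat f (fun m => vert τ v m.val)).det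

/-- cochain -/
def coch {n : ℕ} (f : Fin n → (Fin n → ℕ) → ℝ) (k : Fin n) (η : (Fin n → ℕ) → ℝ)
    (w : Fin n → (Fin n → ℕ)) : ℝ :=
  (∑ m, η (w m)) * (Matrix.of fun r m => row f (w m) (k.succ.succAbove r) :
    Matrix (Fin n) (Fin n) ℝ).det

lemma telescope {n N : ℕ} (i : Fin n) (H : (Fin n → ℕ) → ℝ)
    (h0 : ∀ v, v i = 0 → H v = 0) (hN : ∀ v, v i = N → H v = 0) :
    ∑ v ∈ box n N, H (v + Pi.single i 1) = ∑ v ∈ box n N, H v := by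
  refine Finset.sum_bij_ne_zero (fun v _ _ => v + Pi.single i 1) ?_ ?_ ?_ ?_
  · intro v hv hne
    simp only [box, Fintype.mem_piFinset, mem_range] at hv ⊢
    intro j
    by_cases hj : j = i
    · subst hj
      have : v j + 1 ≠ N := fun h => hne (hN _ (by simpa using h))
      have := hv j
      simp; omega
    · simp [hj, hv j]
  · intro a _ _ b _ _ h
    exact add_right_cancel h
  · intro w hw hne
    have hwi : w i ≠ 0 := fun h => hne (h0 _ h)
    have e : (fun j => if j = i then w j - 1 else w j) + Pi.single i 1 = w := by
      ext j
      by_cases hj : j = i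
      · subst hj; simp; omega
      · simp [hj]
    refine ⟨fun j => if j = i then w j - 1 else w j, ?_, ?_, e⟩
    · simp only [box, Fintype.mem_piFinset, mem_range] at hw ⊢
      intro j
      have := hw j
      split_ifs <;> omega
    · rw [e]; exact hne
  · intros; rfl

lemma coch_zero {n N : ℕ} (f : Fin n → (Fin n → ℕ) → ℝ) (k : Fin n) (η : (Fin n → ℕ) → ℝ)
    (w : Fin n → (Fin n → ℕ))
    (hf : ∀ j v, j ≠ k → (v j = 0 ∨ v j = N) → f j v = v j)
    (hη : ∀ v, (v k = 0 ∨ v k = N) → η v = 0) (i : Fin n) (a : ℕ) (ha : a = 0 ∨ a = N)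
    (hw : ∀ m, w m i = a) : coch f k η w = 0 := by
  unfold coch
  by_cases hik : i = k
  · subst hik
    rw [Finset.sum_eq_zero, zero_mul]
    intro m _
    exact hη _ (by rw [hw]; exact ha)
  · obtain ⟨r0, h0⟩ := Fin.exists_succAbove_eq (x := (0 : Fin (n+1))) (y := k.succ)
      (Fin.succ_ne_zero k).symm
    obtain ⟨r1, h1⟩ := Fin.exists_succAbove_eq (x := i.succ) (y := k.succ)
      (fun h => hik (Fin.succ_injective _ h))
    have hr : r1 ≠ r0 := by
      rintro rfl
      rw [h0] at h1
      exact Fin.succ_ne_zero i h1.symm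
    have : (Matrix.of fun r m => row f (w m) (k.succ.succAbove r) :
      Matrix (Fin n) (Fin n) ℝ).det = 0 := by
      rw [← Matrix.exists_vecMul_eq_zero_iff]
      refine ⟨Pi.single r1 1 - Pi.single r0 (a:ℝ), ?_, ?_⟩
      · intro h
        have := congrFun h r1
        simp [hr] at this
      · ext m
        rw [Matrix.sub_vecMul]
        simp only [Matrix.single_vecMul, Pi.sub_apply, Pi.smul_apply, Matrix.row_apply,
          Matrix.of_apply, h0, h1, row, Fin.cons_succ, Fin.cons_zero, smul_eq_mul, Pi.zero_apply]
        rw [hf i _ hik (by rw [hw]; exact ha), hw]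
        simp
    rw [this, mul_zero]

lemma leibniz {n : ℕ} (f : Fin n → (Fin n → ℕ) → ℝ) (k : Fin n) (η : (Fin n → ℕ) → ℝ)
    (w : Fin (n+1) → (Fin n → ℕ)) :
    (mat (Function.update f k η) w).det = (-1)^(k.val) *
      ∑ m : Fin (n+1), (-1)^(m.val) * coch f k η (fun j => w (m.succAbove j)) := by
  set G : Fin (n+1) → ℝ := fun m => (Matrix.of fun r j =>
    row f (w (m.succAbove j)) (k.succ.succAbove r) : Matrix (Fin n) (Fin n) ℝ).det with hG
  have key : ∀ ρ : (Fin n → ℕ) → ℝ, (mat (Function.update f k ρ) w).det =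
      ∑ m : Fin (n+1), (-1)^(k.val + 1 + m.val) * ρ (w m) * G m := by
    intro ρ
    rw [Matrix.det_succ_row _ k.succ]
    refine Finset.sum_congr rfl fun m _ => ?_
    congr 1
    · simp [mat, row]
    · rw [hG]
      congr 1
      ext r j
      simp only [mat, Matrix.submatrix_apply, Matrix.of_apply]
      have hne : k.succ.succAbove r ≠ k.succ := Fin.succAbove_ne _ _
      generalize k.succ.succAbove r = x at hne ⊢
      refine Fin.cases ?_ (fun x hne => ?_) x hne
      · intro _; simp [row]
      · have : x ≠ k := fun h => hne (by rw [h])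
        simp [row, this]
  have h1 : (mat (Function.update f k (fun _ => 1)) w).det = 0 := by
    refine Matrix.det_zero_of_row_eq (i := 0) (j := k.succ) (Fin.succ_ne_zero k).symm ?_
    ext m
    simp [mat, row]
  rw [key] at h1 ⊢
  have hc : ∀ m, coch f k η (fun j => w (m.succAbove j)) =
      (∑ m, η (w m)) * G m - η (w m) * G m := by
    intro m
    rw [Fin.sum_univ_succAbove _ m]
    simp only [coch, hG]
    ring
  simp only [hc]
  have h2 : ∑ m : Fin (n+1), (-1:ℝ)^(m.val) * G m = 0 := by
    have : (-1:ℝ)^(k.val+1) * ∑ m : Fin (n+1), (-1:ℝ)^(m.val) * G m = 0 := by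
      rw [← h1, Finset.mul_sum]
      refine Finset.sum_congr rfl fun m _ => by ring
    simpa using this
  have h3 : ∑ m : Fin (n+1), (-1:ℝ)^(m.val) * ((∑ m, η (w m)) * G m - η (w m) * G m) =
     (∑ m, η (w m)) * ∑ m : Fin (n+1), (-1:ℝ)^(m.val) * G m -
      ∑ m : Fin (n+1), (-1:ℝ)^(m.val) * (η (w m) * G m) := by
    rw [Finset.mul_sum, ← Finset.sum_sub_distrib]
    refine Finset.sum_congr rfl fun m _ => by ring
  rw [h3, h2, mul_zero, zero_sub, mul_neg, Finset.mul_sum, ← Finset.sum_neg_distrib]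
  refine Finset.sum_congr rfl fun m _ => by ring

lemma sg_mul {n : ℕ} (a b : Equiv.Perm (Fin n)) : sg (a * b) = sg a * sg b := by
  simp [sg]

lemma interior {n N : ℕ} (c : (Fin n → (Fin n → ℕ)) → ℝ) (m : Fin (n+1))
    (h0 : 0 < m.val) (hn : m.val < n) :
    ∑ τ : Equiv.Perm (Fin n), sg τ * ∑ v ∈ box n N,
      c (fun j => vert τ v (m.succAbove j).val) = 0 := by
  set a : Fin n := ⟨m.val - 1, by omega⟩
  set b : Fin n := ⟨m.val, hn⟩
  have hab : a ≠ b := by simp [a, b, Fin.ext_iff]; omega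
  have hs : sg (Equiv.swap a b) = -1 := by simp [sg, Equiv.Perm.sign_swap hab]
  have hv : ∀ (τ : Equiv.Perm (Fin n)) v (j : Fin n), vert (Equiv.swap a b * τ) v (m.succAbove j).val
      = vert τ v (m.succAbove j).val := by
    intro τ v j
    ext i
    refine vert_congr rfl ?_
    rw [Equiv.Perm.mul_apply]
    have hne : (m.succAbove j).val ≠ m.val := fun h => Fin.succAbove_ne m j (Fin.ext h)
    generalize (m.succAbove j).val = x at hne
    rw [Equiv.swap_apply_def]
    split_ifs with h1 h2
    · simp only [h1, a, b]; omega
    · simp only [h2, a, b]; omega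
    · rfl
  have := Equiv.sum_comp (Equiv.mulLeft (Equiv.swap a b)) (fun τ => sg τ * ∑ v ∈ box n N,
      c (fun j => vert τ v (m.succAbove j).val))
  simp only [Equiv.coe_mulLeft, sg_mul, hs, hv, neg_mul, one_mul, Finset.sum_neg_distrib] at this
  linarith

lemma ends {p N : ℕ} (c : (Fin (p+1) → (Fin (p+1) → ℕ)) → ℝ)
    (hc : ∀ w i a, (a = 0 ∨ a = N) → (∀ m, w m i = a) → c w = 0) :
    ∑ τ : Equiv.Perm (Fin (p+1)), sg τ * ∑ v ∈ box (p+1) N,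
      c (fun j => vert τ v (j.val + 1)) = (-1)^p *
    ∑ τ : Equiv.Perm (Fin (p+1)), sg τ * ∑ v ∈ box (p+1) N,
      c (fun j => vert τ v j.val) := by
  rw [← Equiv.sum_comp (Equiv.mulLeft (finRotate (p+1))), Finset.mul_sum]
  refine Finset.sum_congr rfl fun τ _ => ?_
  have hs : sg (finRotate (p+1)) = (-1)^p := by simp [sg]
  rw [Equiv.coe_mulLeft, sg_mul, hs, mul_assoc]
  congr 2
  set i := τ.symm (Fin.last p) with hi
  rw [← telescope (N := N) i (fun v => c (fun j => vert τ v j.val))]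
  · refine Finset.sum_congr rfl fun v _ => ?_
    congr 1
    ext j l
    by_cases hl : l = i
    · rw [hl]
      have h1 : (τ i) = Fin.last p := by simp [hi]
      have h2 : finRotate (p+1) (Fin.last p) = 0 := by simp
      have := j.is_lt
      have h3 : ¬ (p < j.val) := by omega
      simp [vert, h1, h3]
    · have hl' : τ l ≠ Fin.last p := fun h => hl (by rw [hi, ← h]; simp)
      have h3 : (τ l).val < p := Fin.val_lt_last hl'
      refine vert_congr (by simp [hl]) ?_
      rw [Equiv.Perm.mul_apply, coe_finRotate_of_ne_last hl']
      omega
  · intro v hv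
    refine hc _ i 0 (Or.inl rfl) fun m => ?_
    have h1 : (τ i) = Fin.last p := by simp [hi]
    have := m.is_lt
    have h3 : ¬ (p < m.val) := by omega
    simp [vert, hv, h1, h3]
  · intro v hv
    refine hc _ i N (Or.inr rfl) fun m => ?_
    have h1 : (τ i) = Fin.last p := by simp [hi]
    have := m.is_lt
    have h3 : ¬ (p < m.val) := by omega
    simp [vert, hv, h1, h3]

lemma T_zero {p N : ℕ} (f : Fin (p+1) → (Fin (p+1) → ℕ) → ℝ) (k : Fin (p+1))
    (η : (Fin (p+1) → ℕ) → ℝ)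
    (hf : ∀ j v, j ≠ k → (v j = 0 ∨ v j = N) → f j v = v j)
    (hη : ∀ v, (v k = 0 ∨ v k = N) → η v = 0) : T N (Function.update f k η) = 0 := by
  have e : T N (Function.update f k η) = (-1)^k.val * ∑ m : Fin (p+1+1), (-1)^m.val *
      ∑ τ : Equiv.Perm (Fin (p+1)), sg τ * ∑ v ∈ box (p+1) N,
      coch f k η (fun j => vert τ v (m.succAbove j).val) := by
    simp only [T, leibniz, Finset.mul_sum]
    rw [Finset.sum_congr rfl fun τ _ => Finset.sum_comm, Finset.sum_comm]
    refine Finset.sum_congr rfl fun τ _ => ?_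
    refine Finset.sum_congr rfl fun m _ => ?_
    refine Finset.sum_congr rfl fun v _ => ?_
    ring
  have hmid : ∀ m : Fin p, (-1 : ℝ)^(m.castSucc.succ : Fin (p+1+1)).val *
      ∑ τ : Equiv.Perm (Fin (p+1)), sg τ * ∑ v ∈ box (p+1) N,
      coch f k η (fun j => vert τ v (m.castSucc.succ.succAbove j).val) = 0 := by
    intro m
    rw [interior _ _ (by simp) (by simp), mul_zero]
  rw [e, Fin.sum_univ_succ, Fin.sum_univ_castSucc, Finset.sum_eq_zero fun m _ => hmid m]
  have := ends (N := N) (coch f k η) (fun w i a ha hw => coch_zero (N := N) f k η w hf hη i a ha hw)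
  simp only [Fin.zero_succAbove, Fin.val_succ, Fin.succ_last, Fin.succAbove_last, Fin.val_last,
      Fin.val_castSucc, this, Fin.val_zero]
  rw [Nat.succ_eq_add_one, pow_succ]
  ring

lemma T_sub {n N : ℕ} (f : Fin n → (Fin n → ℕ) → ℝ) (k : Fin n) (α β : (Fin n → ℕ) → ℝ) :
    T N (Function.update f k α) - T N (Function.update f k β) =
      T N (Function.update f k (α - β)) := by
  have : ∀ w, (mat (Function.update f k (α - β)) w).det = 
     (mat (Function.update f k α) w).det - (mat (Function.update f k β) w).det := by
    intro w
    have h : ∀ ρ, mat (Function.update f k ρ) w =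
        (mat f w).updateRow k.succ (fun m => ρ (w m)) := by
      intro ρ
      ext r m
      refine Fin.cases ?_ (fun x => ?_) r
      · simp [mat, row, Matrix.updateRow_apply, (Fin.succ_ne_zero k).symm]
      · by_cases hx : x = k
        · subst hx; simp [mat, row]
        · simp [mat, row, Matrix.updateRow_apply, hx]
    rw [h, h, h, eq_sub_iff_add_eq, ← Matrix.det_updateRow_add]
    congr 2
    ext m; simp
  simp only [T, this, Finset.sum_sub_distrib, mul_sub]

def lin {n : ℕ} (k : Fin n) (v : Fin n → ℕ) : ℝ := v k

lemma T_lin_aux {n : ℕ} (τ : Equiv.Perm (Fin n)) (v : Fin n → ℕ) :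
    (mat lin (fun m => vert τ v m.val)).det = sg τ := by
  set M : Matrix (Fin (n+1)) (Fin (n+1)) ℝ := Matrix.of fun r m => if r ≤ m then 1 else 0 with hM
  have hdet : M.det = 1 := by
    rw [Matrix.det_of_isUpperTriangular]
    · simp [hM]
    · intro i j hij
      simp at hij
      simp [hM, hij]
  set σ := Equiv.Perm.decomposeFin.symm (0, τ) with hσ
  have h1 : (M.submatrix σ id).det = sg τ := by
    rw [Matrix.det_permute, hdet]
    simp [hσ, sg]
  rw [← h1]
  refine Matrix.det_eq_of_forall_row_eq_smul_add_const (Fin.cons 0 (fun k => (v k : ℝ))) 0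
    (by simp) ?_
  intro r m
  refine Fin.cases ?_ (fun x => ?_) r
  · simp [mat, row, hM, hσ]
  · have h1 : mat lin (fun m => vert τ v m.val) x.succ m = (vert τ v m.val x : ℝ) := by
      simp [mat, row, lin]
    have h3 : σ x.succ = (τ x).succ := by simp [hσ]
    have h4 : M.submatrix σ id 0 m = 1 := by simp [hM, hσ]
    have h5 : M.submatrix σ id x.succ m = if (τ x).val < m.val then 1 else 0 := by
      rw [Matrix.submatrix_apply, h3]
      simp only [hM, Matrix.of_apply, id, Fin.le_def, Fin.val_succ, Nat.succ_le_iff]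
    rw [h1, h4, h5]
    simp [vert, add_comm]

lemma T_lin {n N : ℕ} (hN : 0 < N) : T N (lin (n := n)) ≠ 0 := by
  have : ∀ τ : Equiv.Perm (Fin n), sg τ * sg τ = 1 := by
    intro τ
    rcases Int.units_eq_one_or (Equiv.Perm.sign τ) with h | h <;> simp [sg, h]
  simp only [T, T_lin_aux, Finset.sum_const, nsmul_eq_mul]
  simp_rw [mul_left_comm _ ((#(box n N) : ℕ) : ℝ), this]
  simp [box]
  intro h
  omega

lemma T_eq {p N : ℕ} (f : Fin (p+1) → (Fin (p+1) → ℕ) → ℝ)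
    (hf : ∀ j v, (v j = 0 ∨ v j = N) → f j v = v j) : T N f = T N (lin (n := p+1)) := by
  have : ∀ s : Finset (Fin (p+1)), T N (fun k => if k ∈ s then lin k else f k) = T N f := by
    intro s
    induction s using Finset.induction_on with
    | empty => simp
    | insert k s hk ih =>
      rw [← ih, ← sub_eq_zero]
      set F : Fin (p+1) → (Fin (p+1) → ℕ) → ℝ := fun k => if k ∈ s then lin k else f k with hF
      have e1 : (fun j => if j ∈ insert k s then lin j else f j) = Function.update F k (lin k) := by
        ext j v
        by_cases hj : j = k
        · subst hj; simp
        · simp [hj, hF]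
      have e2 : F = Function.update F k (f k) := by
        ext j v
        by_cases hj : j = k
        · subst hj; simp [hF, hk]
        · simp [hj]
      rw [e1]
      conv_lhs => rw [show T N F = T N (Function.update F k (f k)) from congrArg _ e2]
      rw [T_sub]
      apply T_zero
      · intro j v _ h
        simp only [hF]
        split_ifs
        · rfl
        · exact hf _ _ h
      · intro v h
        simp [lin, hf _ _ h]
  have := this univ
  simpa using this.symm

/-- Combinatorial core. -/
lemma combi {p N : ℕ} (hN : 0 < N) (f : Fin (p+1) → (Fin (p+1) → ℕ) → ℝ)
    (hf : ∀ j v, (v j = 0 ∨ v j = N) → f j v = v j) :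
    ∃ v : Fin (p+1) → ℕ, (∀ i, v i < N) ∧ ∃ τ : Equiv.Perm (Fin (p+1)),
      ∀ k, ∃ m m' : ℕ, f k (vert τ v m) ≠ f k (vert τ v m') := by
  have h := T_lin (n := p+1) hN
  rw [← T_eq f hf] at h
  obtain ⟨τ, -, h⟩ := Finset.exists_ne_zero_of_sum_ne_zero h
  obtain ⟨v, hv, h⟩ := Finset.exists_ne_zero_of_sum_ne_zero (right_ne_zero_of_mul h)
  refine ⟨v, by simpa [box] using hv, τ, fun k => ?_⟩
  by_contra! hcon
  apply h
  rw [← Matrix.exists_vecMul_eq_zero_iff]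
  refine ⟨Pi.single k.succ 1 - Pi.single 0 (f k (vert τ v 0)), ?_, ?_⟩
  · intro h
    have := congrFun h k.succ
    simp at this
  · ext m
    rw [Matrix.sub_vecMul]
    simp [mat, row, hcon m 0]


lemma main {p : ℕ} (L U : Fin (p+1) → ℝ) (hle : L ≤ U)
    (g : (Fin (p+1) → ℝ) → Fin (p+1) → ℝ) (hcont : ContinuousOn g (Set.Icc L U))
    (hL : ∀ x ∈ Set.Icc L U, ∀ i, x i = L i → g x i ≤ 0)
    (hU : ∀ x ∈ Set.Icc L U, ∀ i, x i = U i → 0 ≤ g x i) :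
    ∃ x ∈ Set.Icc L U, g x = 0 := by
  have hK : IsCompact (Set.Icc L U) := isCompact_Icc
  obtain ⟨x0, hx0, hmin⟩ := hK.exists_isMinOn ⟨L, le_refl _, hle⟩ hcont.norm
  refine ⟨x0, hx0, ?_⟩
  by_contra hne
  have hpos : 0 < ‖g x0‖ := norm_pos_iff.mpr hne
  obtain ⟨δ, hδ, huc⟩ := Metric.uniformContinuousOn_iff.mp
    (hK.uniformContinuousOn_of_continuous hcont) _ hpos
  obtain ⟨N, hN⟩ := exists_nat_gt (‖U - L‖ / δ)
  have hN0 : (0:ℝ) < N := lt_of_le_of_lt (by positivity) hN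
  have hN1 : 0 < N := by exact_mod_cast hN0
  have hND : ‖U - L‖ / N < δ := by
    rw [div_lt_iff₀ hδ] at hN
    rw [div_lt_iff₀ hN0]; linarith
  set pt : (Fin (p+1) → ℕ) → (Fin (p+1) → ℝ) := fun v i => L i + (v i / N) * (U i - L i) with hpt
  have hmem : ∀ v, (∀ i, v i ≤ N) → pt v ∈ Set.Icc L U := by
    intro v hv
    constructor <;> intro i <;> have h1 := sub_nonneg.mpr (hle i)
    · have : 0 ≤ ((v i : ℝ) / N) * (U i - L i) := by positivity
      simp only [hpt]; linarith
    · have h2 : (v i : ℝ) / N ≤ 1 := by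
        rw [div_le_one hN0]; exact_mod_cast hv i
      have := mul_le_mul_of_nonneg_right h2 h1
      simp only [hpt]; linarith
  set f : Fin (p+1) → (Fin (p+1) → ℕ) → ℝ := fun k v =>
    if v k = 0 then 0 else if v k = N then (N:ℝ) else if 0 < g (pt v) k then (N:ℝ) else 0 with hf
  obtain ⟨v, hv, τ, hvt⟩ := combi hN1 f (by
    rintro j v (h | h)
    · simp [hf, h]
    · simp [hf, h, hN1.ne'])
  have hw : ∀ m i, vert τ v m i ≤ N := by
    intro m i
    have := hv i
    simp only [vert]; split_ifs <;> omega
  have hdist : ∀ m, dist (pt v) (pt (vert τ v m)) < δ := by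
    intro m
    refine lt_of_le_of_lt ((dist_pi_le_iff (by positivity)).mpr fun i => ?_) hND
    have h1 : |U i - L i| ≤ ‖U - L‖ := norm_le_pi_norm (U - L) i
    have h2 : pt v i - pt (vert τ v m) i =
        -((if (τ i).val < m then 1 else 0 : ℝ) * ((U i - L i) / N)) := by
      simp only [hpt, vert]; push_cast; ring
    rw [Real.dist_eq, h2, abs_neg]
    split_ifs
    · rw [one_mul, abs_div, abs_of_pos hN0]
      gcongr
    · rw [zero_mul, abs_zero]; positivity
  have hlo : ∀ k w, (∀ i, w i ≤ N) → f k w = 0 → g (pt w) k ≤ 0 := by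
    intro k w hw h
    simp only [hf] at h
    split_ifs at h with h1 h2 h3
    · exact hL _ (hmem w hw) k (by simp [hpt, h1])
    · exact absurd h hN0.ne'
    · exact absurd h hN0.ne'
    · exact not_lt.mp h3
  have hhi : ∀ k w, (∀ i, w i ≤ N) → f k w ≠ 0 → f k w = N ∧ 0 ≤ g (pt w) k := by
    intro k w hw h
    simp only [hf] at h ⊢
    split_ifs at h ⊢ with h1 h2 h3
    · exact absurd rfl h
    · exact ⟨rfl, hU _ (hmem w hw) k (by simp [hpt, h2, hN0.ne'])⟩
    · exact ⟨rfl, h3.le⟩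
    · exact absurd rfl h
  have hxm := hmem v (fun i => (hv i).le)
  have hlt : ‖g (pt v)‖ < ‖g x0‖ := by
    rw [pi_norm_lt_iff hpos]
    intro k
    have hd : ∀ m, |g (pt v) k - g (pt (vert τ v m)) k| < ‖g x0‖ := fun m =>
      lt_of_le_of_lt (dist_le_pi_dist (g (pt v)) (g (pt (vert τ v m))) k)
        (huc _ hxm _ (hmem _ (hw m)) (hdist m))
    have key : ∃ a b, g (pt (vert τ v a)) k ≤ 0 ∧ 0 ≤ g (pt (vert τ v b)) k := by
      obtain ⟨m, m', h⟩ := hvt k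
      by_cases h1 : f k (vert τ v m) = 0
      · refine ⟨m, m', hlo k _ (hw m) h1, (hhi k _ (hw m') ?_).2⟩
        rw [h1] at h; exact h.symm
      · by_cases h2 : f k (vert τ v m') = 0
        · exact ⟨m', m, hlo k _ (hw m') h2, (hhi k _ (hw m) h1).2⟩
        · exact absurd ((hhi k _ (hw m) h1).1.trans (hhi k _ (hw m') h2).1.symm) h
    obtain ⟨a, b, ha, hb⟩ := key
    have h1 := abs_lt.mp (hd a)
    have h2 := abs_lt.mp (hd b)
    rw [Real.norm_eq_abs, abs_lt]
    constructor <;> linarith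
  exact absurd (hmin hxm) (not_le.mpr hlt)

end PM

/-- Abstract Poincaré–Miranda-type lemma with monotonicity: a
continuous, coordinatewise-monotone map `g` on a box `Λ ⊆ ℝ^q` whose components
have the appropriate signs at `2q` corner points has a zero in `Λ`. -/
theorem stmt7 {q : ℕ} (hq : 0 < q)
    (lamL lamU : Fin q → ℝ) (hle : lamL ≤ lamU)
    (Lam : Set (Fin q → ℝ)) (hLam : Lam = {lam | lamL ≤ lam ∧ lam ≤ lamU})
    (g : (Fin q → ℝ) → Fin q → ℝ)
    (hcont : ContinuousOn g Lam)
    (hmono : ∀ lam ∈ Lam, ∀ mu ∈ Lam, lam ≤ mu → g lam ≤ g mu)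
    (hsign : ∀ i : Fin q,
      g (fun j => if j = i then lamL i else lamU j) i ≤ 0 ∧
      0 ≤ g (fun j => if j = i then lamU i else lamL j) i) :
    ∃ lamStar ∈ Lam, g lamStar = 0 := by
  obtain ⟨p, rfl⟩ : ∃ p, q = p + 1 := ⟨q - 1, by omega⟩
  subst hLam
  refine PM.main lamL lamU hle g hcont ?_ ?_
  · intro x hx i hxi
    refine le_trans (hmono x hx _ ⟨?_, ?_⟩ ?_ i) (hsign i).1 <;> intro j <;> by_cases hj : j = i
    · subst hj; simp
    · simpa [hj] using hle j
    · subst hj; simpa using hle j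
    · simp [hj]
    · subst hj; simp [hxi]
    · simpa [hj] using hx.2 j
  · intro x hx i hxi
    refine le_trans (hsign i).2 (hmono _ ⟨?_, ?_⟩ x hx ?_ i) <;> intro j <;> by_cases hj : j = i
    · subst hj; simpa using hle j
    · simp [hj]
    · subst hj; simp
    · simpa [hj] using hle j
    · subst hj; simp [hxi]
    · simpa [hj] using hx.1 j
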